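/- Let σ be a real-valued Borel measure on 𝕋 with σ(𝕋) = 0 satisfying σ(I) ≤ h(|I|) for every arc I, where h is a gauge function. Then there exists a constant C = C(h) > 0 such that the Poisson integral satisfies ∫_𝕋 (1-|z|²)/|ζ-z|² dσ(ζ) ≤ C·h(1-|z|)/(1-|z|) for all z in the unit disk 𝔻. -/

import Mathlib

open MeasureTheory Set Filter
open scoped ENNReal

noncomputable section

/-- The unit circle, modelled as `ℝ/ℤ` with normalized Haar (Lebesgue) measure `m(𝕋)=1`. -/
abbrev Circ := AddCircle (1 : ℝ)

/-- An open arc of the circle. -/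
def IsOpenArc (I : Set Circ) : Prop :=
  ∃ a b : ℝ, I = (fun x : ℝ => (x : Circ)) '' Set.Ioo a b

/-- An arc of the circle (up to endpoints, modelled as a half-open arc). -/
def IsArc (I : Set Circ) : Prop :=
  ∃ a b : ℝ, I = (fun x : ℝ => (x : Circ)) '' Set.Ioc a b

/-- A gauge function: nonnegative, increasing and continuous on `(0,1]`, tending to `0`
at `0⁺`, with `h(x)/x` decreasing and tending to `∞` at `0⁺`. -/
def GaugeFun (h : ℝ → ℝ) : Prop :=
  (∀ x ∈ Set.Ioc (0:ℝ) 1, 0 ≤ h x) ∧ MonotoneOn h (Set.Ioc 0 1) ∧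
  ContinuousOn h (Set.Ioc 0 1) ∧
  Tendsto h (nhdsWithin 0 (Set.Ioi 0)) (nhds 0) ∧
  AntitoneOn (fun x => h x / x) (Set.Ioc 0 1) ∧
  Tendsto (fun x => h x / x) (nhdsWithin 0 (Set.Ioi 0)) atTop

/-- Membership in the family `F(h,R)`: integrable `f` with `0 ≤ f ≤ R` pointwise whose
mass on every arc `I` is at most `h(|I|)`. -/
def MemF (h : ℝ → ℝ) (R : Circ → ℝ≥0∞) (f : Circ → ℝ) : Prop :=
  Integrable f ∧ (∀ z, 0 ≤ f z) ∧ (∀ z, ENNReal.ofReal (f z) ≤ R z) ∧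
  ∀ I : Set Circ, IsArc I → (∫ z in I, f z) ≤ h (volume I).toReal

/-- The Hausdorff functional `M(h,R)`: infimum over families `U` of open arcs of
`Σ_{ℓ∈U} h(|ℓ|) + ∫_{𝕋 \ ∪ℓ} R dm`. -/
def Mfunc (h : ℝ → ℝ) (R : Circ → ℝ≥0∞) : ℝ≥0∞ :=
  ⨅ (U : Set (Set Circ)) (_ : ∀ ℓ ∈ U, IsOpenArc ℓ),
    (∑' ℓ : U, ENNReal.ofReal (h (volume (ℓ : Set Circ)).toReal)) +
      ∫⁻ z in (⋃ ℓ ∈ U, ℓ)ᶜ, R z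

/-- The embedding `𝕋 = ℝ/ℤ → ℂ`, `t ↦ e^{2πit}`. -/
def circEmb (ζ : Circ) : ℂ := (AddCircle.toCircle ζ : ℂ)

lemma pe_normsq (r θ x : ℝ) :
    ‖circEmb ((x : ℝ) : Circ) - (r : ℂ) * Complex.exp ((2 * Real.pi * θ : ℝ) * Complex.I)‖ ^ 2
      = 1 + r ^ 2 - 2 * r * Real.cos (2 * Real.pi * (x - θ)) := by
  unfold circEmb
  rw [AddCircle.toCircle_apply_mk, Circle.coe_exp, ← Complex.normSq_eq_norm_sq,
    Complex.normSq_apply]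
  simp only [Complex.sub_re, Complex.sub_im, Complex.exp_ofReal_mul_I_re,
    Complex.exp_ofReal_mul_I_im, Complex.re_ofReal_mul, Complex.im_ofReal_mul, div_one]
  rw [mul_sub (2 * Real.pi) x θ, Real.cos_sub]
  nlinarith [Real.sin_sq_add_cos_sq (2 * Real.pi * x), Real.sin_sq_add_cos_sq (2 * Real.pi * θ)]

lemma pe_polar (z : ℂ) :
    ∃ θ : ℝ, z = (‖z‖ : ℂ) * Complex.exp ((2 * Real.pi * θ : ℝ) * Complex.I) := by
  refine ⟨z.arg / (2 * Real.pi), ?_⟩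
  have : 2 * Real.pi * (z.arg / (2 * Real.pi)) = z.arg := by
    field_simp
  rw [this]
  exact (Complex.norm_mul_exp_arg_mul_I z).symm

lemma pe_level (r θ : ℝ) (hr0 : 0 ≤ r) (c : ℝ) (D : Circ → ℝ)
    (hD : ∀ x : ℝ, D (x : Circ) = 1 + r ^ 2 - 2 * r * Real.cos (2 * Real.pi * (x - θ))) :
    {ζ | D ζ < c} = ∅ ∨ {ζ | D ζ < c} = univ ∨
      ∃ a : ℝ, 0 < a ∧ {ζ | D ζ < c} = (fun x : ℝ => (x : Circ)) '' Set.Ioo (θ - a) (θ + a) := by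
  have hpi := Real.pi_pos
  have hcoe : ∀ ζ : Circ, ∃ u : ℝ, |u| ≤ 1 / 2 ∧ ζ = ((θ + u : ℝ) : Circ) := by
    intro ζ
    obtain ⟨y, rfl⟩ := QuotientAddGroup.mk_surjective ζ
    refine ⟨(y - θ) - round (y - θ), abs_sub_round _, ?_⟩
    have : (θ + ((y - θ) - round (y - θ)) : ℝ) = y - (round (y - θ) : ℤ) • (1 : ℝ) := by
      simp only [zsmul_eq_mul, mul_one]; ring
    rw [this, AddCircle.coe_sub, AddCircle.coe_zsmul, AddCircle.coe_period]
    simp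
  have hDu : ∀ u : ℝ, D ((θ + u : ℝ) : Circ) = 1 + r ^ 2 - 2 * r * Real.cos (2 * Real.pi * u) := by
    intro u
    rw [hD]; congr 4; ring
  rcases hr0.eq_or_lt with h0 | hr
  · subst h0
    have hc : ∀ ζ, D ζ = 1 := by
      intro ζ
      obtain ⟨u, -, rfl⟩ := hcoe ζ
      rw [hDu]; ring
    by_cases h : (1 : ℝ) < c
    · right; left; ext ζ; simp [hc, h]
    · left; ext ζ; simp [hc]; linarith
  · set k := (1 + r ^ 2 - c) / (2 * r) with hk
    have hkc : 2 * r * k = 1 + r ^ 2 - c := by rw [hk]; field_simp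
    have hiff : ∀ u, D ((θ + u : ℝ) : Circ) < c ↔ k < Real.cos (2 * Real.pi * u) := by
      intro u
      rw [hDu]
      constructor
      · intro h
        have : 2 * r * k < 2 * r * Real.cos (2 * Real.pi * u) := by linarith
        exact lt_of_mul_lt_mul_left this (by positivity)
      · intro h
        have : 2 * r * k < 2 * r * Real.cos (2 * Real.pi * u) :=
          mul_lt_mul_of_pos_left h (by positivity)
        linarith
    by_cases h1 : 1 ≤ k
    · left
      ext ζ
      obtain ⟨u, -, rfl⟩ := hcoe ζ
      simp only [mem_ofPred_eq, hiff, mem_empty_iff_false, iff_false, not_lt]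
      exact (Real.cos_le_one _).trans h1
    by_cases h2 : k < -1
    · right; left
      ext ζ
      obtain ⟨u, -, rfl⟩ := hcoe ζ
      simp only [mem_ofPred_eq, hiff, mem_univ, iff_true]
      exact h2.trans_le (Real.neg_one_le_cos _)
    right; right
    push Not at h1 h2
    have hap : 0 < Real.arccos k := Real.arccos_pos.2 h1
    have hle := Real.arccos_le_pi k
    refine ⟨Real.arccos k / (2 * Real.pi), by positivity, ?_⟩
    have hcos : Real.cos (Real.arccos k) = k := Real.cos_arccos h2 h1.le
    have key : ∀ u, |u| ≤ 1 / 2 → (k < Real.cos (2 * Real.pi * u) ↔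
        |u| < Real.arccos k / (2 * Real.pi)) := by
      intro u hu
      rw [lt_div_iff₀ (by positivity)]
      have e : Real.cos (2 * Real.pi * u) = Real.cos (|u| * (2 * Real.pi)) := by
        rw [← Real.cos_abs (2 * Real.pi * u), abs_mul, abs_of_pos (by positivity : 0 < 2 * Real.pi),
          mul_comm]
      rw [e]
      nth_rewrite 1 [← hcos]
      apply Real.strictAntiOn_cos.lt_iff_gt
      · exact ⟨hap.le, hle⟩
      · constructor
        · positivity
        · nlinarith
    ext ζ
    constructor
    · intro h
      obtain ⟨u, hu, rfl⟩ := hcoe ζ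
      rw [mem_ofPred_eq, hiff, key u hu, abs_lt] at h
      exact ⟨θ + u, ⟨by linarith, by linarith⟩, rfl⟩
    · rintro ⟨x, ⟨hx1, hx2⟩, rfl⟩
      have hx : |x - θ| < Real.arccos k / (2 * Real.pi) := by
        rw [abs_lt]; constructor <;> linarith
      have hx' : |x - θ| ≤ 1 / 2 := by
        refine hx.le.trans ?_
        rw [div_le_div_iff₀ (by positivity) (by norm_num)]; linarith
      have := (hiff (x - θ)).2 ((key _ hx').2 hx)
      simpa using this

lemma pe_gauge (h : ℝ → ℝ) (hh : GaugeFun h) {d x : ℝ} (hd : d ∈ Ioc (0:ℝ) 1)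
    (hx : x ∈ Ioc (0:ℝ) 1) : h x ≤ h d / d * x + h d := by
  obtain ⟨h0, h1, -, -, h2, -⟩ := hh
  have hdp := hd.1
  have hxp := hx.1
  have := h0 d hd
  rcases le_total x d with hxd | hxd
  · have h3 := h1 hx hd hxd
    have : 0 ≤ h d / d * x := by positivity
    linarith
  · have h3 : h x / x ≤ h d / d := h2 hd hx hxd
    rw [div_le_iff₀ hx.1] at h3
    linarith

lemma pe_arc (h : ℝ → ℝ) (hh : GaugeFun h) {d : ℝ} (hd : d ∈ Ioc (0:ℝ) 1)
    (μ ν : Measure Circ) [IsFiniteMeasure μ] [IsFiniteMeasure ν]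
    (hI : ∀ I : Set Circ, IsArc I → (μ I).toReal - (ν I).toReal ≤ h (volume I).toReal)
    (θ a b : ℝ) (hab : a < b) (hθ : θ ∈ Ioc a b) :
    μ ((fun x : ℝ => (x : Circ)) '' Ioc a b) ≤
      (ν + (ENNReal.ofReal (h d / d) • volume +
        ENNReal.ofReal (h d) • Measure.dirac (θ : Circ)) : Measure Circ) ((fun x : ℝ => (x : Circ)) '' Ioc a b) := by
  set J := (fun x : ℝ => (x : Circ)) '' Ioc a b with hJ
  have hθJ : (θ : Circ) ∈ J := ⟨θ, hθ, rfl⟩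
  have hpos : 0 < volume J := by
    have ho : IsOpen ((fun x : ℝ => (x : Circ)) '' Ioo a b) :=
      QuotientAddGroup.isOpenMap_coe _ isOpen_Ioo
    exact (ho.measure_pos volume ((nonempty_Ioo.2 hab).image _)).trans_le
      (measure_mono (image_mono Ioo_subset_Ioc_self))
  have hle : volume J ≤ 1 := by
    refine (measure_mono (subset_univ J)).trans ?_
    rw [AddCircle.measure_univ]; simp
  have hfin : volume J ≠ ⊤ := (hle.trans_lt ENNReal.one_lt_top).ne
  have hx : (volume J).toReal ∈ Ioc (0:ℝ) 1 :=
    ⟨ENNReal.toReal_pos hpos.ne' hfin, by simpa using ENNReal.toReal_mono (by simp) hle⟩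
  have h1 := hI J ⟨a, b, rfl⟩
  have h2 := pe_gauge h hh hd hx
  have hd0 : 0 ≤ h d := hh.1 d hd
  have hd1 : 0 ≤ h d / d := div_nonneg hd0 hd.1.le
  simp only [Measure.add_apply, Measure.smul_apply, smul_eq_mul,
    Measure.dirac_apply_of_mem hθJ, mul_one]
  rw [← ENNReal.ofReal_toReal (measure_ne_top μ J), ← ENNReal.ofReal_toReal (measure_ne_top ν J),
    ← ENNReal.ofReal_toReal hfin, ← ENNReal.ofReal_mul hd1, ← ENNReal.ofReal_add (by positivity) hd0,
    ← ENNReal.ofReal_add (by positivity) (by positivity)]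
  apply ENNReal.ofReal_le_ofReal
  linarith

lemma pe_open (h : ℝ → ℝ) (hh : GaugeFun h) {d : ℝ} (hd : d ∈ Ioc (0:ℝ) 1)
    (μ ν : Measure Circ) [IsFiniteMeasure μ] [IsFiniteMeasure ν]
    (hI : ∀ I : Set Circ, IsArc I → (μ I).toReal - (ν I).toReal ≤ h (volume I).toReal)
    (θ a : ℝ) (ha : 0 < a) :
    μ ((fun x : ℝ => (x : Circ)) '' Ioo (θ - a) (θ + a)) ≤
      (ν + (ENNReal.ofReal (h d / d) • volume +
        ENNReal.ofReal (h d) • Measure.dirac (θ : Circ)) : Measure Circ)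
          ((fun x : ℝ => (x : Circ)) '' Ioo (θ - a) (θ + a)) := by
  have hU : Ioo (θ - a) (θ + a) = ⋃ n : ℕ, Ioc (θ - a) (θ + a - a / (n + 1)) := by
    ext x
    simp only [mem_Ioo, mem_iUnion, mem_Ioc]
    constructor
    · rintro ⟨h1, h2⟩
      obtain ⟨n, hn⟩ := exists_nat_gt (a / (θ + a - x))
      refine ⟨n, h1, ?_⟩
      have h3 : 0 < θ + a - x := by linarith
      rw [div_lt_iff₀ h3] at hn
      have : a / (n + 1) ≤ θ + a - x := by
        rw [div_le_iff₀ (by positivity)]; nlinarith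
      linarith
    · rintro ⟨n, h1, h2⟩
      have : 0 < a / ((n:ℝ) + 1) := by positivity
      exact ⟨h1, by linarith⟩
  have hmono : Monotone (fun n : ℕ => (fun x : ℝ => (x : Circ)) '' Ioc (θ - a) (θ + a - a / (n + 1))) := by
    intro m n hmn
    apply image_mono
    apply Ioc_subset_Ioc_right
    have : a / ((n:ℝ) + 1) ≤ a / (m + 1) := by gcongr
    linarith
  nth_rewrite 1 [hU]
  rw [image_iUnion, hmono.measure_iUnion]
  refine iSup_le fun n => ?_
  have hn : a / ((n:ℝ) + 1) ≤ a := div_le_self ha.le (by linarith [(Nat.cast_nonneg n : (0:ℝ) ≤ n)])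
  refine (pe_arc h hh hd μ ν hI θ _ _ (by linarith) ⟨by linarith, by linarith⟩).trans ?_
  apply measure_mono
  apply image_mono
  rw [hU]
  exact subset_iUnion (fun n : ℕ => Ioc (θ - a) (θ + a - a / (n + 1))) n

lemma pe_norm (ζ : Circ) : ‖circEmb ζ‖ = 1 := by
  unfold circEmb; exact Circle.norm_coe _

lemma pe_mass (z : ℂ) (hz : ‖z‖ < 1) :
    (∫ ζ : Circ, (1 - ‖z‖ ^ 2) / ‖circEmb ζ - z‖ ^ 2) = 1 := by
  have h1 := DiffContOnCl.circleAverage_poissonKernel_smul' (f := fun _ => (1 : ℂ)) (c := 0) (R := 1)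
    (w := z) diffContOnCl_const (by simpa using hz)
  have h2 : Real.circleAverage (fun w : ℂ => (1 - ‖z‖ ^ 2) / ‖w - z‖ ^ 2) 0 1 = 1 := by
    apply Complex.ofReal_injective
    rw [Complex.ofReal_one, ← h1, Real.circleAverage, Real.circleAverage, Complex.real_smul,
      smul_eq_mul, Complex.ofReal_mul, ← intervalIntegral.integral_ofReal]
    congr 2
    ext x
    simp
  rw [← AddCircle.intervalIntegral_preimage 1 0]
  rw [Real.circleAverage, smul_eq_mul] at h2
  refine Eq.trans ?_ h2
  have := intervalIntegral.integral_comp_mul_left (a := 0) (b := 1)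
    (fun y : ℝ => (1 - ‖z‖ ^ 2) / ‖circleMap 0 1 y - z‖ ^ 2) (c := 2 * Real.pi) (by positivity)
  simp only [mul_zero, mul_one, smul_eq_mul] at this
  rw [← this, zero_add]
  congr 1
  ext x
  simp [circEmb, circleMap, AddCircle.toCircle_apply_mk]

/-- Poisson integral estimate: if `σ = μ - ν` is a real Borel measure on `𝕋` with
`σ(𝕋) = 0` and `σ(I) ≤ h(|I|)` for every arc `I`, then there is `C = C(h) > 0` with
`∫_𝕋 (1-|z|²)/|ζ-z|² dσ(ζ) ≤ C·h(1-|z|)/(1-|z|)` for all `z ∈ 𝔻`. -/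
theorem poisson_estimate (h : ℝ → ℝ) (hh : GaugeFun h) :
    ∃ C : ℝ, 0 < C ∧
      ∀ (μ ν : Measure Circ), IsFiniteMeasure μ → IsFiniteMeasure ν →
        μ Set.univ = ν Set.univ →
        (∀ I : Set Circ, IsArc I → (μ I).toReal - (ν I).toReal ≤ h (volume I).toReal) →
        ∀ z : ℂ, ‖z‖ < 1 →
          (∫ ζ : Circ, (1 - ‖z‖ ^ 2) / ‖circEmb ζ - z‖ ^ 2 ∂μ) -
            (∫ ζ : Circ, (1 - ‖z‖ ^ 2) / ‖circEmb ζ - z‖ ^ 2 ∂ν) ≤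
            C * h (1 - ‖z‖) / (1 - ‖z‖) := by
  refine ⟨3, by norm_num, ?_⟩
  intro μ ν hμ hν huniv hI z hz
  obtain ⟨θ, hθ⟩ := pe_polar z
  have hmass := pe_mass z hz
  set P : Circ → ℝ := fun ζ => (1 - ‖z‖ ^ 2) / ‖circEmb ζ - z‖ ^ 2 with hP
  set r := ‖z‖ with hr
  have hr0 : 0 ≤ r := norm_nonneg z
  have hd : 1 - r ∈ Ioc (0:ℝ) 1 := ⟨by linarith, by linarith⟩
  have hnum : 0 < 1 - r ^ 2 := by nlinarith
  have hDpos : ∀ ζ, 1 - r ≤ ‖circEmb ζ - z‖ := by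
    intro ζ
    have := norm_sub_norm_le (circEmb ζ) z
    rwa [pe_norm] at this
  have hD0 : ∀ ζ, 0 < ‖circEmb ζ - z‖ := fun ζ => hd.1.trans_le (hDpos ζ)
  have hcE : Continuous circEmb := continuous_subtype_val.comp AddCircle.continuous_toCircle
  have hcont : Continuous P := by
    apply Continuous.div continuous_const (by fun_prop)
    intro ζ
    exact (pow_pos (hD0 ζ) 2).ne'
  have hP0 : ∀ ζ, 0 ≤ P ζ := fun ζ => div_nonneg hnum.le (by positivity)
  have hint : ∀ m : Measure Circ, IsFiniteMeasure m → Integrable P m := by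
    intro m hm
    exact hcont.integrable_of_hasCompactSupport (HasCompactSupport.of_compactSpace _)
  set lam : Measure Circ := ENNReal.ofReal (h (1 - r) / (1 - r)) • volume +
        ENNReal.ofReal (h (1 - r)) • Measure.dirac (θ : Circ) with hlam
  have hh0 : 0 ≤ h (1 - r) := hh.1 _ hd
  have hh1 : 0 ≤ h (1 - r) / (1 - r) := div_nonneg hh0 hd.1.le
  have f1 : IsFiniteMeasure (ENNReal.ofReal (h (1 - r) / (1 - r)) • (volume : Measure Circ)) :=
    Measure.smul_finite _ ENNReal.ofReal_ne_top
  have f2 : IsFiniteMeasure (ENNReal.ofReal (h (1 - r)) • Measure.dirac (θ : Circ)) :=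
    Measure.smul_finite _ ENNReal.ofReal_ne_top
  have f3 : IsFiniteMeasure lam := by rw [hlam]; infer_instance
  have hlev : ∀ t ∈ Ioi (0:ℝ), μ {ζ | t < P ζ} ≤ (ν + lam) {ζ | t < P ζ} := by
    intro t ht
    have hset : {ζ | t < P ζ} = {ζ | ‖circEmb ζ - z‖ ^ 2 < (1 - r ^ 2) / t} := by
      ext ζ
      simp only [mem_ofPred_eq, hP]
      rw [lt_div_iff₀ (pow_pos (hD0 ζ) 2), lt_div_iff₀ (mem_Ioi.1 ht), mul_comm]
    rw [hset]
    rcases pe_level r θ hr0 ((1 - r ^ 2) / t) (fun ζ => ‖circEmb ζ - z‖ ^ 2)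
      (by intro x; rw [← pe_normsq, ← hθ]) with h1 | h1 | ⟨a, ha, h1⟩
    · rw [h1]; simp
    · rw [h1, huniv]; simp [Measure.add_apply]
    · rw [h1]
      exact pe_open h hh hd μ ν hI θ a ha
  have hL : ∫⁻ ζ, ENNReal.ofReal (P ζ) ∂μ ≤ ∫⁻ ζ, ENNReal.ofReal (P ζ) ∂(ν + lam) := by
    rw [lintegral_eq_lintegral_meas_lt μ (Eventually.of_forall hP0) hcont.aemeasurable,
      lintegral_eq_lintegral_meas_lt _ (Eventually.of_forall hP0) hcont.aemeasurable]
    exact setLIntegral_mono' measurableSet_Ioi hlev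
  have hB : ∫ ζ, P ζ ∂μ ≤ ∫ ζ, P ζ ∂(ν + lam) := by
    rw [← ofReal_integral_eq_lintegral_ofReal (hint μ hμ) (Eventually.of_forall hP0),
      ← ofReal_integral_eq_lintegral_ofReal (hint _ inferInstance) (Eventually.of_forall hP0)] at hL
    exact (ENNReal.ofReal_le_ofReal_iff (integral_nonneg hP0)).1 hL
  rw [integral_add_measure (hint ν hν) (hint lam f3), hlam,
    integral_add_measure (hint _ f1) (hint _ f2), integral_smul_measure, integral_smul_measure,
    hmass, integral_dirac, ENNReal.toReal_ofReal hh1, ENNReal.toReal_ofReal hh0] at hB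
  have hPm : P θ ≤ 2 / (1 - r) := by
    simp only [hP]
    have := hDpos (θ : Circ)
    rw [div_le_div_iff₀ (pow_pos (hD0 _) 2) hd.1]
    have h5 : (1 - r) ^ 2 ≤ ‖circEmb (θ : Circ) - z‖ ^ 2 := pow_le_pow_left₀ hd.1.le this 2
    nlinarith [hd.1]
  have h6 : h (1 - r) * P θ ≤ h (1 - r) * (2 / (1 - r)) := mul_le_mul_of_nonneg_left hPm hh0
  have h7 : 3 * h (1 - r) / (1 - r) = h (1 - r) / (1 - r) + h (1 - r) * (2 / (1 - r)) := by ring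
  simp only [smul_eq_mul, mul_one] at hB
  rw [h7]
  linarith
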